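/- arXiv:2102.01160 — 2 statements merged into one kernel-verified Lean document; each statement's English description precedes it below -/
import Mathlib

section
/- Let T be a nonnegative integrable random variable on a probability space, and let ϖ > 0 and ILR > 0. Then the ergodic capacity satisfies E[log(1 + ϖ·T/(ILR·T + 1))] ≤ log(1 + ϖ·𝒥/(ILR·𝒥 + 1)), where 𝒥 = E[T]. -/
open MeasureTheory

/-!
The Jensen gap of `t ↦ t / (c * t + 1)` is an explicit nonnegative multiple of a square, so this
ratio is concave, and composing it with the concave increasing logarithm preserves concavity. The
resulting capacity lies between `0` and a multiple of `t`, hence is integrable along `T`, and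
Jensen's inequality applies on `[0, ∞)`.
-/

/-- The end-to-end signal-to-noise-and-distortion ratio, as a function of the effective ratio `t`.
The impairment level `c` (the paper's `ILR`) makes it saturate at `1 / c`. -/
def sndr {𝕜 : Type*} [Field 𝕜] (c t : 𝕜) : 𝕜 :=
  t / (c * t + 1)

/-- The capacity, in nats, of a channel whose effective ratio is `t`; the ergodic capacity is its
expectation. Here `w` is the paper's `ϖ`. -/
noncomputable def capacity (w c t : ℝ) : ℝ :=
  Real.log (1 + w * sndr c t)

section SNDR

variable {𝕜 : Type*} [Field 𝕜] [LinearOrder 𝕜] [IsStrictOrderedRing 𝕜] {c t : 𝕜}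

theorem sndr_nonneg (hc : 0 ≤ c) (ht : 0 ≤ t) : 0 ≤ sndr c t := by
  unfold sndr
  positivity

theorem sndr_le_self (hc : 0 ≤ c) (ht : 0 ≤ t) : sndr c t ≤ t :=
  div_le_self ht (le_add_of_nonneg_left (mul_nonneg hc ht))

theorem convex_setOf_mul_add_one_pos (c : 𝕜) : Convex 𝕜 {t : 𝕜 | 0 < c * t + 1} := by
  simpa [Set.preimage, add_comm, neg_lt_iff_pos_add] using
    (convex_Ioi (-1 : 𝕜)).linear_preimage (LinearMap.mulLeft 𝕜 c)

theorem concaveOn_sndr (hc : 0 ≤ c) : ConcaveOn 𝕜 {t : 𝕜 | 0 < c * t + 1} (sndr c) := by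
  refine ⟨convex_setOf_mul_add_one_pos c, fun x hx y hy u v hu hv huv => ?_⟩
  have hxy : 0 < c * (u * x + v * y) + 1 := convex_setOf_mul_add_one_pos c hx hy hu hv huv
  replace hx : 0 < c * x + 1 := hx
  replace hy : 0 < c * y + 1 := hy
  have jensen_gap : c * u * v * (x - y) ^ 2 /
        ((c * x + 1) * (c * y + 1) * (c * (u * x + v * y) + 1)) =
      (u * x + v * y) / (c * (u * x + v * y) + 1) -
        (u * (x / (c * x + 1)) + v * (y / (c * y + 1))) := by
    obtain rfl : v = 1 - u := by linear_combination huv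
    field_simp
    ring
  simp only [sndr, smul_eq_mul]
  rw [← sub_nonneg, ← jensen_gap]
  positivity

end SNDR

theorem concaveOn_log_comp {E : Type*} [AddCommMonoid E] [SMul ℝ E] {s : Set E} {f : E → ℝ}
    (hf : ConcaveOn ℝ s f) (hpos : ∀ x ∈ s, 0 < f x) :
    ConcaveOn ℝ s fun x => Real.log (f x) := by
  refine ⟨hf.1, fun x hx y hy u v hu hv huv => ?_⟩
  have hcombo : 0 < u • f x + v • f y := convex_Ioi (0 : ℝ) (hpos x hx) (hpos y hy) hu hv huv
  calc u • Real.log (f x) + v • Real.log (f y)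
      ≤ Real.log (u • f x + v • f y) :=
        strictConcaveOn_log_Ioi.concaveOn.2 (hpos x hx) (hpos y hy) hu hv huv
    _ ≤ Real.log (f (u • x + v • y)) := Real.log_le_log hcombo (hf.2 hx hy hu hv huv)

section Capacity

variable {w c t : ℝ}

theorem one_le_one_add_mul_sndr (hw : 0 ≤ w) (hc : 0 ≤ c) (ht : 0 ≤ t) : 1 ≤ 1 + w * sndr c t :=
  le_add_of_nonneg_right (mul_nonneg hw (sndr_nonneg hc ht))

theorem one_add_mul_sndr_pos (hw : 0 ≤ w) (hc : 0 ≤ c) (ht : 0 ≤ t) : 0 < 1 + w * sndr c t :=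
  zero_lt_one.trans_le (one_le_one_add_mul_sndr hw hc ht)

theorem capacity_nonneg (hw : 0 ≤ w) (hc : 0 ≤ c) (ht : 0 ≤ t) : 0 ≤ capacity w c t :=
  Real.log_nonneg (one_le_one_add_mul_sndr hw hc ht)

theorem capacity_le_mul (hw : 0 ≤ w) (hc : 0 ≤ c) (ht : 0 ≤ t) : capacity w c t ≤ w * t :=
  calc capacity w c t
      ≤ 1 + w * sndr c t - 1 := Real.log_le_sub_one_of_pos (one_add_mul_sndr_pos hw hc ht)
    _ = w * sndr c t := add_sub_cancel_left _ _
    _ ≤ w * t := mul_le_mul_of_nonneg_left (sndr_le_self hc ht) hw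

theorem concaveOn_capacity (hw : 0 ≤ w) (hc : 0 ≤ c) :
    ConcaveOn ℝ (Set.Ici 0) (capacity w c) := by
  have hsub : Set.Ici 0 ⊆ {t : ℝ | 0 < c * t + 1} := fun t (ht : 0 ≤ t) =>
    show 0 < c * t + 1 by positivity
  have hsndr : ConcaveOn ℝ (Set.Ici 0) (sndr c) := (concaveOn_sndr hc).subset hsub (convex_Ici 0)
  exact concaveOn_log_comp ((concaveOn_const 1 (convex_Ici 0)).add (hsndr.smul hw))
    fun _ ht => one_add_mul_sndr_pos hw hc ht

theorem continuousOn_capacity (hw : 0 ≤ w) (hc : 0 ≤ c) :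
    ContinuousOn (capacity w c) (Set.Ici 0) := by
  have hden : ∀ t ∈ Set.Ici (0 : ℝ), c * t + 1 ≠ 0 := fun t (ht : 0 ≤ t) => by positivity
  have hsndr : ContinuousOn (sndr c) (Set.Ici 0) := by
    unfold sndr
    fun_prop (disch := assumption)
  exact (continuousOn_const.add (hsndr.const_mul w)).log
    fun _ ht => (one_add_mul_sndr_pos hw hc ht).ne'

theorem measurable_capacity (w c : ℝ) : Measurable (capacity w c) := by
  unfold capacity sndr
  fun_prop

theorem integrable_capacity_comp {Ω : Type*} [MeasurableSpace Ω] {μ : Measure Ω} {T : Ω → ℝ}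
    (hw : 0 ≤ w) (hc : 0 ≤ c) (hT : Integrable T μ) (hT_nonneg : ∀ᵐ ω ∂μ, 0 ≤ T ω) :
    Integrable (capacity w c ∘ T) μ := by
  have hmeas : AEMeasurable (capacity w c ∘ T) μ :=
    (measurable_capacity w c).comp_aemeasurable hT.aemeasurable
  refine (hT.const_mul w).mono' hmeas.aestronglyMeasurable ?_
  filter_upwards [hT_nonneg] with ω hω
  rw [Function.comp_apply, Real.norm_of_nonneg (capacity_nonneg hw hc hω)]
  exact capacity_le_mul hw hc hω

end Capacity

/-- Jensen bound on the ergodic capacity: for a nonnegative integrable random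
variable T, ϖ > 0 and ILR > 0,
E[log(1 + ϖ·T/(ILR·T + 1))] ≤ log(1 + ϖ·𝒥/(ILR·𝒥 + 1)) with 𝒥 = E[T]. -/
theorem ergodic_capacity_jensen_bound {Ω : Type*} [MeasurableSpace Ω]
    (μ : Measure Ω) [IsProbabilityMeasure μ]
    (T : Ω → ℝ) (hTnn : ∀ᵐ ω ∂μ, 0 ≤ T ω) (hTint : Integrable T μ)
    (ϖ ILR : ℝ) (hϖ : 0 < ϖ) (hILR : 0 < ILR) :
    ∫ ω, Real.log (1 + ϖ * (T ω / (ILR * T ω + 1))) ∂μ ≤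
      Real.log (1 + ϖ * ((∫ ω, T ω ∂μ) / (ILR * (∫ ω, T ω ∂μ) + 1))) :=
  (concaveOn_capacity hϖ.le hILR.le).le_map_integral
    (continuousOn_capacity hϖ.le hILR.le) isClosed_Ici hTnn hTint
    (integrable_capacity_comp hϖ.le hILR.le hTint hTnn)
end

section
/- Let N and m be natural numbers with 1 ≤ m ≤ N. Then for every real p, Σ_{k=m}^{N} C(N,k)·p^k·(1−p)^{N−k} = 1 − m·C(N,m)·Σ_{n=0}^{m−1} C(m−1,n)·(−1)^n·(1−p)^{N−m+n+1} / (N−m+n+1). -/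
/-! Differentiating the binomial tail in `p` telescopes to the single term
`m * C(N, m) * p ^ (m - 1) * (1 - p) ^ (N - m)`. Expanding `p ^ (m - 1) = (1 - (1 - p)) ^ (m - 1)`
and integrating term by term in powers of `1 - p` gives minus the alternating sum times
`m * C(N, m)`, so the two sides differ by a constant, which is read off at `p = 1`. Carried out
with formal derivatives of polynomials, the argument works over every field of characteristic
zero. -/

open Polynomial Finset

theorem eq_of_derivative_eq_of_eval_eq {R : Type*} [Ring R] [IsAddTorsionFree R]
    {f g : R[X]} {a : R} (hderiv : derivative f = derivative g)
    (heval : f.eval a = g.eval a) : f = g := by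
  have hconst : f - g = C ((f - g).coeff 0) :=
    eq_C_of_derivative_eq_zero (by rw [derivative_sub, hderiv, sub_self])
  have hcoeff : (f - g).coeff 0 = 0 := by
    rw [← eval_C (x := a) (a := (f - g).coeff 0), ← hconst, eval_sub, heval, sub_self]
  rwa [hcoeff, C_0, sub_eq_zero] at hconst

theorem pow_mul_one_sub_pow_eq_sum {R : Type*} [CommRing R] (x : R) (a b : ℕ) :
    x ^ a * (1 - x) ^ b =
      ∑ j ∈ range (a + 1), (a.choose j : R) * (-1) ^ j * (1 - x) ^ (b + j) := by
  have hx : x = -(1 - x) + 1 := by ring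
  calc x ^ a * (1 - x) ^ b = (-(1 - x) + 1) ^ a * (1 - x) ^ b := by rw [← hx]
    _ = _ := by
      rw [add_pow, sum_mul]
      refine sum_congr rfl fun j _ ↦ ?_
      rw [neg_pow, one_pow, pow_add]
      ring

section BernsteinTail

variable (R : Type*) [CommRing R]

/-- The probability of at least `ν` successes in `n` independent trials, as a polynomial in the
success probability `X`. -/
noncomputable def bernsteinTail (n ν : ℕ) : R[X] :=
  ∑ k ∈ Icc ν n, bernsteinPolynomial R n k

namespace bernsteinTail

theorem eval_eq_sum (n ν : ℕ) (x : R) :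
    (bernsteinTail R n ν).eval x =
      ∑ k ∈ Icc ν n, (n.choose k : R) * x ^ k * (1 - x) ^ (n - k) := by
  simp [bernsteinTail, bernsteinPolynomial, eval_finsetSum]

theorem eval_one {n ν : ℕ} (h : ν ≤ n) : (bernsteinTail R n ν).eval 1 = 1 := by
  simp [bernsteinTail, eval_finsetSum, bernsteinPolynomial.eval_at_1, h]

theorem derivative_succ {n ν : ℕ} (h : ν ≤ n) :
    derivative (bernsteinTail R (n + 1) (ν + 1)) = (n + 1) * bernsteinPolynomial R n ν := by
  calc derivative (bernsteinTail R (n + 1) (ν + 1))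
      = ∑ k ∈ Icc ν n, derivative (bernsteinPolynomial R (n + 1) (k + 1)) := by
        rw [bernsteinTail, derivative_sum, ← map_add_right_Icc, sum_map]
        rfl
    _ = -((n + 1) * ∑ k ∈ Icc ν n,
          (bernsteinPolynomial R n (k + 1) - bernsteinPolynomial R n k)) := by
        simp only [bernsteinPolynomial.derivative_succ_aux, mul_sum, ← sum_neg_distrib,
          ← mul_neg, neg_sub]
    _ = (n + 1) * bernsteinPolynomial R n ν := by
        rw [sum_Icc_sub h, bernsteinPolynomial.eq_zero_of_lt R n.lt_succ_self]
        ring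

end bernsteinTail

end BernsteinTail

section UpperBetaIntegral

variable (K : Type*) [Field K]

/-- The incomplete beta integral `∫_X^1 t^a (1 - t)^b dt` as a polynomial in its lower limit `X`,
written out in powers of `1 - X`. The exponents are one less than the usual beta parameters. -/
noncomputable def upperBetaIntegral (a b : ℕ) : K[X] :=
  ∑ j ∈ range (a + 1), C ((a.choose j : K) * (-1) ^ j / (b + j + 1)) * (1 - X) ^ (b + j + 1)

namespace upperBetaIntegral

theorem eval_eq_sum (a b : ℕ) (x : K) :
    (upperBetaIntegral K a b).eval x =
      ∑ j ∈ range (a + 1), (a.choose j : K) * (-1) ^ j * (1 - x) ^ (b + j + 1) / (b + j + 1) := by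
  simp [upperBetaIntegral, eval_finsetSum, div_mul_eq_mul_div]

theorem eval_one (a b : ℕ) : (upperBetaIntegral K a b).eval 1 = 0 := by
  simp [eval_eq_sum]

theorem derivative_eq [CharZero K] (a b : ℕ) :
    derivative (upperBetaIntegral K a b) = -(X ^ a * (1 - X) ^ b) := by
  rw [pow_mul_one_sub_pow_eq_sum, upperBetaIntegral, derivative_sum, ← sum_neg_distrib]
  refine sum_congr rfl fun j _ ↦ ?_
  have hne : (b + j + 1 : K) ≠ 0 := by exact_mod_cast (b + j).succ_ne_zero
  have hcancel : C ((a.choose j : K) * (-1) ^ j / (b + j + 1)) * C ((b + j : ℕ) + 1 : K) =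
      (a.choose j : K[X]) * (-1) ^ j := by
    rw [← C_mul, Nat.cast_add, div_mul_cancel₀ _ hne]
    simp
  rw [derivative_C_mul, derivative_pow_succ, ← hcancel, derivative_sub, derivative_one,
    derivative_X]
  ring

end upperBetaIntegral

end UpperBetaIntegral

theorem bernsteinTail_succ_eq_one_sub_upperBetaIntegral (K : Type*) [Field K] [CharZero K]
    {n ν : ℕ} (h : ν ≤ n) :
    bernsteinTail K (n + 1) (ν + 1) =
      1 - ((ν + 1) * (n + 1).choose (ν + 1) : ℕ) * upperBetaIntegral K ν (n - ν) := by
  have hchoose : ((n : K[X]) + 1) * n.choose ν = (n + 1).choose (ν + 1) * (ν + 1) := by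
    exact_mod_cast Nat.add_one_mul_choose_eq n ν
  refine eq_of_derivative_eq_of_eval_eq (a := 1) ?_ ?_
  · rw [bernsteinTail.derivative_succ K h, derivative_sub, derivative_one,
      derivative_natCast_mul, upperBetaIntegral.derivative_eq, bernsteinPolynomial]
    push_cast
    linear_combination X ^ ν * (1 - X) ^ (n - ν) * hchoose
  · simp [bernsteinTail.eval_one K (Nat.succ_le_succ h), upperBetaIntegral.eval_one]

theorem order_statistic_binomial_tail_identity_general {K : Type*} [Field K] [CharZero K]
    (N m : ℕ) (hm : 1 ≤ m) (hmN : m ≤ N) (p : K) :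
    ∑ k ∈ Icc m N, (N.choose k : K) * p ^ k * (1 - p) ^ (N - k) =
      1 - (m : K) * (N.choose m : K) *
        ∑ n ∈ range m, ((m - 1).choose n : K) * (-1 : K) ^ n *
          (1 - p) ^ (N - m + n + 1) / ((N : K) - m + n + 1) := by
  obtain ⟨ν, rfl⟩ := Nat.exists_eq_add_of_le' hm
  obtain ⟨n, rfl⟩ := Nat.exists_eq_add_of_le' (hm.trans hmN)
  have hνn : ν ≤ n := Nat.le_of_succ_le_succ hmN
  have htail := congrArg (eval p) (bernsteinTail_succ_eq_one_sub_upperBetaIntegral K hνn)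
  rw [bernsteinTail.eval_eq_sum] at htail
  simpa [upperBetaIntegral.eval_eq_sum, Nat.cast_sub hνn] using htail

/-- For 1 ≤ m ≤ N and every real p,
Σ_{k=m}^{N} C(N,k)·p^k·(1−p)^{N−k}
  = 1 − m·C(N,m)·Σ_{n=0}^{m−1} C(m−1,n)·(−1)^n·(1−p)^{N−m+n+1}/(N−m+n+1). -/
theorem order_statistic_binomial_tail_identity (N m : ℕ) (hm : 1 ≤ m) (hmN : m ≤ N)
    (p : ℝ) :
    ∑ k ∈ Finset.Icc m N, (N.choose k : ℝ) * p ^ k * (1 - p) ^ (N - k) =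
      1 - (m : ℝ) * (N.choose m : ℝ) *
        ∑ n ∈ Finset.range m, ((m - 1).choose n : ℝ) * (-1 : ℝ) ^ n *
          (1 - p) ^ (N - m + n + 1) / ((N : ℝ) - m + n + 1) :=
  order_statistic_binomial_tail_identity_general N m hm hmN p
end
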